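/- Let (A, t) be a C_k-algebra and F ⊆ A. Then F is a cyclic deductive system if and only if F is a c-filter of A. -/

import Mathlib

universe u

/-- Modal pseudocomplemented De Morgan algebra (mpM-algebra). -/
class MpM (A : Type u) extends DistribLattice A, BoundedOrder A where
  dm : A → A   -- De Morgan negation ∼
  ps : A → A   -- pseudocomplement *
  dm_dm : ∀ x : A, dm (dm x) = x
  dm_sup : ∀ x y : A, dm (x ⊔ y) = dm x ⊓ dm y
  pseudo : ∀ a x : A, a ⊓ x = ⊥ ↔ x ≤ ps a
  modal : ∀ x : A, x ⊔ dm x ≤ x ⊔ ps x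

open MpM

variable {A : Type u} [MpM A]

/-- ∇x = ∼(∼x ∧ x*) -/
def nabla (x : A) : A := dm (dm x ⊓ ps x)

/-- △x = ∼∇∼x -/
def tri (x : A) : A := dm (nabla (dm x))

/-- A C_k-algebra structure on an mpM-algebra `A`: an automorphism `t` with `t^k = id`. -/
structure CkStr (A : Type u) [MpM A] (k : ℕ) where
  t : A → A
  bij : Function.Bijective t
  map_inf : ∀ x y : A, t (x ⊓ y) = t x ⊓ t y
  map_sup : ∀ x y : A, t (x ⊔ y) = t x ⊔ t y
  map_dm : ∀ x : A, t (dm x) = dm (t x)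
  map_ps : ∀ x : A, t (ps x) = ps (t x)
  map_bot : t (⊥ : A) = ⊥
  map_top : t (⊤ : A) = ⊤
  periodic : ∀ x : A, t^[k] x = x

/-- Lattice filter: nonempty, upward closed, closed under binary meets. -/
def IsLatFilter (F : Set A) : Prop :=
  F.Nonempty ∧ (∀ x ∈ F, ∀ y : A, x ≤ y → y ∈ F) ∧ ∀ x ∈ F, ∀ y ∈ F, x ⊓ y ∈ F

/-- c-filter: a filter closed under △ and t. -/
def IsCFilter {k : ℕ} (T : CkStr A k) (F : Set A) : Prop :=
  IsLatFilter F ∧ ∀ x ∈ F, tri x ∈ F ∧ T.t x ∈ F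

/-- maximal c-filter: proper and not properly contained in a proper c-filter. -/
def IsMaxCFilter {k : ℕ} (T : CkStr A k) (N : Set A) : Prop :=
  IsCFilter T N ∧ N ≠ Set.univ ∧
    ∀ G : Set A, IsCFilter T G → G ≠ Set.univ → N ⊆ G → N = G

/-- prime filter -/
def IsPrimeFilter (P : Set A) : Prop :=
  IsLatFilter P ∧ P ≠ Set.univ ∧ ∀ x y : A, x ⊔ y ∈ P → x ∈ P ∨ y ∈ P

/-- ultrafilter: maximal proper (lattice) filter -/
def IsUltraFilter (U : Set A) : Prop :=
  IsLatFilter U ∧ U ≠ Set.univ ∧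
    ∀ G : Set A, IsLatFilter G → G ≠ Set.univ → U ⊆ G → U = G

/-- Birula–Rasiowa transformation φ(P) = A \ {∼x : x ∈ P}. -/
def brPhi (P : Set A) : Set A := Set.univ \ (dm '' P)

/-- a ⇁ b = (⋁_{i=1}^{k} ∇(∼ t^i(a))) ∨ b -/
def rimp {k : ℕ} (T : CkStr A k) (a b : A) : A :=
  ((Finset.Icc 1 k).sup fun i => nabla (dm (T.t^[i] a))) ⊔ b

/-- cyclic deductive system -/
def IsCDS {k : ℕ} (T : CkStr A k) (D : Set A) : Prop :=
  (⊤ : A) ∈ D ∧ ∀ x ∈ D, ∀ y : A, rimp T x y ∈ D → y ∈ D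

/-- maximal cyclic deductive system -/
def IsMaxCDS {k : ℕ} (T : CkStr A k) (M : Set A) : Prop :=
  IsCDS T M ∧ M ≠ Set.univ ∧
    ∀ G : Set A, IsCDS T G → G ≠ Set.univ → M ⊆ G → M = G

/-- the smallest cyclic deductive system containing `X` -/
def genCDS {k : ℕ} (T : CkStr A k) (X : Set A) : Set A :=
  ⋂₀ {D : Set A | IsCDS T D ∧ X ⊆ D}

/-- K(A) = {x : t(x) = x and ∇x = x} -/
def Kset {k : ℕ} (T : CkStr A k) : Set A := {x : A | T.t x = x ∧ nabla x = x}

/-- consistency operator ∘x = ⋀_{i=0}^{k} t^i((∼x ∨ x) ∧ (x ∧ ∼x)*) -/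
def cCirc {k : ℕ} (T : CkStr A k) (x : A) : A :=
  (Finset.Icc 0 k).inf fun i => T.t^[i] ((dm x ⊔ x) ⊓ ps (x ⊓ dm x))

/-- x → y = ∼((∼(x∨y))* ∧ (x∨y)) ∨ ((∼(x∧y))* ∧ (x∧y)) -/
def mpTo (x y : A) : A :=
  dm (ps (dm (x ⊔ y)) ⊓ (x ⊔ y)) ⊔ (ps (dm (x ⊓ y)) ⊓ (x ⊓ y))

/-- x ⇒ y = (x → y) ∧ (∼y → ∼x) -/
def mpIff (x y : A) : A := mpTo x y ⊓ mpTo (dm y) (dm x)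

theorem nabla_dm_eq (a : A) : nabla (dm a) = dm (tri a) := by
  unfold tri; rw [dm_dm]

theorem tri_eq (a : A) : tri a = a ⊓ ps (dm a) := by
  unfold tri nabla; rw [dm_dm, dm_dm]

theorem dm_inf' (x y : A) : dm (x ⊓ y) = dm x ⊔ dm y := by
  rw [← dm_dm (dm x ⊔ dm y), dm_sup, dm_dm, dm_dm]

theorem dm_anti {x y : A} (h : x ≤ y) : dm y ≤ dm x := by
  rw [← sup_eq_right.2 h, dm_sup]; exact inf_le_left

theorem dm_bot' : dm (⊥ : A) = ⊤ := by
  apply top_unique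
  have := dm_anti (bot_le : (⊥ : A) ≤ dm ⊤)
  rwa [dm_dm] at this

theorem tri_inf_dm (z : A) : tri z ⊓ dm (tri z) = ⊥ := by
  have h0 : dm z ⊓ ps (dm z) = ⊥ := (pseudo _ _).2 le_rfl
  have h1 := dm_anti (modal (dm z))
  rw [dm_sup, dm_sup, dm_dm] at h1
  rw [tri_eq, dm_inf', inf_sup_left]
  apply bot_unique
  rw [← h0]
  refine sup_le ?_ ?_
  · exact le_inf inf_le_right (inf_le_left.trans inf_le_right)
  · refine le_inf ?_ (inf_le_left.trans inf_le_right)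
    exact (le_inf (inf_le_left.trans inf_le_left) inf_le_right).trans (h1.trans inf_le_right)

theorem dm_tri_sup (z : A) : dm (tri z) ⊔ tri z = ⊤ := by
  have := congrArg dm (tri_inf_dm z)
  rwa [dm_inf', dm_dm, dm_bot'] at this

theorem tri_le (z : A) : tri z ≤ z := by
  rw [tri_eq]; exact inf_le_left

theorem le_rimp {k : ℕ} (T : CkStr A k) (x y : A) {i : ℕ} (h1 : 1 ≤ i) (h2 : i ≤ k) :
    dm (tri (T.t^[i] x)) ⊔ y ≤ rimp T x y := by
  unfold rimp
  rw [← nabla_dm_eq]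
  exact sup_le_sup_right
    (Finset.le_sup (f := fun i => nabla (dm (T.t^[i] x))) (Finset.mem_Icc.2 ⟨h1, h2⟩)) _

theorem rimp_top {k : ℕ} (T : CkStr A k) (x y : A) {i : ℕ} (h1 : 1 ≤ i) (h2 : i ≤ k)
    (h : tri (T.t^[i] x) ≤ y) : rimp T x y = ⊤ := by
  apply top_unique
  rw [← dm_tri_sup (T.t^[i] x)]
  exact (sup_le_sup_left h _).trans (le_rimp T x y h1 h2)

theorem filter_sup (F : Set A) (hF : IsLatFilter F) (z : ℕ → A) (y : A) (s : Finset ℕ)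
    (hz : ∀ i, tri (z i) ∈ F) (h : (s.sup fun i => nabla (dm (z i))) ⊔ y ∈ F) : y ∈ F := by
  induction s using Finset.induction_on with
  | empty => simpa using h
  | insert a s _ ih =>
    apply ih
    rw [Finset.sup_insert, sup_assoc, nabla_dm_eq] at h
    refine hF.2.1 _ (hF.2.2 _ (hz a) _ h) _ ?_
    rw [inf_sup_left, tri_inf_dm, bot_sup_eq]
    exact inf_le_right

theorem stmt8 {k : ℕ} (hk : 0 < k) (T : CkStr A k) (F : Set A) :
    IsCDS T F ↔ IsCFilter T F := by
  constructor
  · rintro ⟨ht, hmp⟩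
    have key : ∀ x ∈ F, ∀ y, rimp T x y = ⊤ → y ∈ F := fun x hx y h =>
      hmp x hx y (h ▸ ht)
    refine ⟨⟨⟨⊤, ht⟩, ?_, ?_⟩, ?_⟩
    · intro x hx y hxy
      refine key x hx y (rimp_top T x y hk le_rfl ?_)
      rw [T.periodic]; exact (tri_le x).trans hxy
    · intro x hx y hy
      refine hmp y hy _ (key x hx _ (rimp_top T x _ hk le_rfl ?_))
      rw [T.periodic]
      refine le_trans ?_ (le_rimp T y _ hk le_rfl)
      rw [T.periodic, sup_inf_left]
      refine le_inf ((tri_le x).trans le_sup_right) ?_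
      refine le_top.trans ?_
      rw [← dm_tri_sup y]
      exact sup_le_sup_left (tri_le y) _
    · intro x hx
      constructor
      · refine key x hx _ (rimp_top T x _ hk le_rfl ?_)
        rw [T.periodic]
      · exact key x hx _ (rimp_top T x _ le_rfl hk (tri_le _))
  · rintro ⟨hF, hc⟩
    refine ⟨?_, ?_⟩
    · obtain ⟨a, ha⟩ := hF.1
      exact hF.2.1 a ha _ le_top
    · intro x hx y h
      have hi : ∀ i, T.t^[i] x ∈ F := by
        intro i
        induction i with
        | zero => exact hx
        | succ n ih => rw [Function.iterate_succ_apply']; exact (hc _ ih).2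
      exact filter_sup F hF (fun i => T.t^[i] x) y _ (fun i => (hc _ (hi i)).1) h
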